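/- Let $\mathcal A$ be a finite alphabet with $N\ge 2$ letters and let $\mathcal W$ be the set of finite words over $\mathcal A$, including the empty word $\emptyset$; write $|w|$ for the length of $w$, and $wi$ for $w$ followed by the letter $i$. Let $\sim$ be an equivalence relation on $\mathcal W$ such that $v\sim w$ implies $|v|=|w|$. Let $m:\mathcal A\to(0,1)$ satisfy $\sum_{a\in\mathcal A}m(a)=1$, and put $m(w_1\cdots w_n)=m(w_1)\cdots m(w_n)$, $m(\emptyset)=1$. Define $p(v,w)=m(w)/\sum_{\hat v\sim v}m(\hat v)$ if $w=\hat v i$ for some $\hat v\sim v$ and $i\in\mathcal A$, and $p(v,w)=0$ otherwise; let $p_0(v,w)=\delta_v(w)$ and $p_n(v,w)=\sum_{u\in\mathcal W}p_{n-1}(v,u)\,p(u,w)$ for $n\ge1$. The Green function is $g(v,w)=p_{|w|-|v|}(v,w)$ if $|v|\le|w|$ and $g(v,w)=0$ otherwise, and the Martin kernel is $k(v,w)=g(v,w)/g(\emptyset,w)$. Then for all words $v,w,\tilde w\in\mathcal W$ with $\tilde w\sim w$ and all letters $i,j\in\mathcal A$ such that $v\notin\{wi,\,wj,\,\tilde wi,\,\tilde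 wj\}$, $$k(v,wi)=k(v,wj)=k(v,\tilde wj)=k(v,\tilde wi).$$ -/

import Mathlib

namespace Martin

/-- Finite words over the alphabet `Fin N`; the empty list is the empty word and
`w ++ [i]` is the word `wi`. -/
abbrev Word (N : ℕ) := List (Fin N)

/-- The mass of a word: `m(w₁⋯wₙ) = m(w₁)⋯m(wₙ)`, `m(∅) = 1`. -/
noncomputable def mW {N : ℕ} (m : Fin N → ℝ) (w : Word N) : ℝ := (w.map m).prod

/-- Total mass of the equivalence class of `v`: `Σ_{u ∼ v} m(u)`. The sum is finite whenever
equivalent words have the same length. -/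
noncomputable def massCl {N : ℕ} (sim : Word N → Word N → Prop) (m : Fin N → ℝ)
    (v : Word N) : ℝ :=
  ∑ᶠ u ∈ {u : Word N | sim u v}, mW m u

open Classical in
/-- Transition probability: `p(v,w) = m(w) / Σ_{u ∼ v} m(u)` if `w = v'i` for some
`v' ∼ v` and some letter `i`, and `0` otherwise. -/
noncomputable def pTrans {N : ℕ} (sim : Word N → Word N → Prop) (m : Fin N → ℝ)
    (v w : Word N) : ℝ :=
  if ∃ v' : Word N, ∃ i : Fin N, sim v' v ∧ w = v' ++ [i] then mW m w / massCl sim m v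
  else 0

/-- The `n`-step transition probabilities: `p₀(v,w) = δ_v(w)` and
`pₙ₊₁(v,w) = Σ_u pₙ(v,u) p(u,w)`. Only words `u` equivalent to the parent of `w` contribute,
so the sum is finite whenever equivalent words have the same length. -/
noncomputable def pn {N : ℕ} (sim : Word N → Word N → Prop) (m : Fin N → ℝ) :
    ℕ → Word N → Word N → ℝ
  | 0, v, w => if w = v then 1 else 0
  | n + 1, v, w => ∑ᶠ u : Word N, pn sim m n v u * pTrans sim m u w

/-- The Green function: `g(v,w) = p_{|w|-|v|}(v,w)` if `|v| ≤ |w|`, and `0` otherwise. -/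
noncomputable def green {N : ℕ} (sim : Word N → Word N → Prop) (m : Fin N → ℝ)
    (v w : Word N) : ℝ :=
  if v.length ≤ w.length then pn sim m (w.length - v.length) v w else 0

/-- The Martin kernel `k(v,w) = g(v,w) / g(∅,w)`. -/
noncomputable def mkernel {N : ℕ} (sim : Word N → Word N → Prop) (m : Fin N → ℝ)
    (v w : Word N) : ℝ :=
  green sim m v w / green sim m [] w

end Martin

namespace Martin

variable {N : ℕ} {sim : Word N → Word N → Prop} {m : Fin N → ℝ}

theorem mW_pos (hm : ∀ a, 0 < m a) (w : Word N) : 0 < mW m w := by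
  refine List.prod_pos fun x hx => ?_
  obtain ⟨a, -, rfl⟩ := List.mem_map.1 hx
  exact hm a

theorem finite_setOf_sim (hlen : ∀ v w : Word N, sim v w → v.length = w.length) (w : Word N) :
    {u : Word N | sim u w}.Finite :=
  (List.finite_length_eq (Fin N) w.length).subset fun u hu => hlen u w hu

theorem setOf_sim_eq (hsim : Equivalence sim) {v w : Word N} (h : sim v w) :
    {u : Word N | sim u v} = {u : Word N | sim u w} :=
  Set.ext fun _ => ⟨fun hu => hsim.trans hu h, fun hu => hsim.trans hu (hsim.symm h)⟩

theorem massCl_congr (hsim : Equivalence sim) {v w : Word N} (h : sim v w) :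
    massCl sim m v = massCl sim m w := by
  rw [massCl, massCl, setOf_sim_eq hsim h]

theorem massCl_pos (hsim : Equivalence sim)
    (hlen : ∀ v w : Word N, sim v w → v.length = w.length) (hm : ∀ a, 0 < m a) (w : Word N) :
    0 < massCl sim m w := by
  rw [massCl, finsum_mem_eq_finite_toFinset_sum _ (finite_setOf_sim hlen w)]
  exact Finset.sum_pos (fun u _ => mW_pos hm u)
    ⟨w, (finite_setOf_sim hlen w).mem_toFinset.2 (hsim.refl w)⟩

theorem pTrans_append_of_sim (hsim : Equivalence sim) {u w : Word N} (h : sim u w) (i : Fin N) :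
    pTrans sim m u (w ++ [i]) = mW m (w ++ [i]) / massCl sim m w := by
  rw [pTrans, if_pos ⟨w, i, hsim.symm h, rfl⟩, massCl_congr hsim h]

theorem pTrans_append_of_not_sim (hsim : Equivalence sim) {u w : Word N} (h : ¬ sim u w)
    (i : Fin N) : pTrans sim m u (w ++ [i]) = 0 := by
  refine if_neg ?_
  rintro ⟨v', k, hv', he⟩
  obtain rfl := (List.append_inj' he rfl).1
  exact h (hsim.symm hv')

/-- The last step into a child of `w` starts in the class of `w`, and its probability is the same
from every word of that class. -/
theorem pn_succ_append (hsim : Equivalence sim) (n : ℕ) (v w : Word N) (i : Fin N) :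
    pn sim m (n + 1) v (w ++ [i]) =
      mW m (w ++ [i]) * ((∑ᶠ u ∈ {u : Word N | sim u w}, pn sim m n v u) / massCl sim m w) := by
  classical
  have hterm : ∀ u, pn sim m n v u * pTrans sim m u (w ++ [i]) =
      ∑ᶠ _ : u ∈ {u : Word N | sim u w},
        pn sim m n v u * (mW m (w ++ [i]) / massCl sim m w) := by
    intro u
    by_cases h : sim u w
    · rw [pTrans_append_of_sim hsim h, finsum_eq_if, if_pos (show u ∈ {u | sim u w} from h)]
    · rw [pTrans_append_of_not_sim hsim h, finsum_eq_if, if_neg (show u ∉ {u | sim u w} from h), mul_zero]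
  rw [pn, finsum_congr hterm, ← finsum_mem_mul (fun u => pn sim m n v u)]
  ring

theorem pn_nil (hsim : Equivalence sim)
    (hlen : ∀ v w : Word N, sim v w → v.length = w.length) (hm : ∀ a, 0 < m a) (w : Word N) :
    pn sim m w.length [] w = mW m w := by
  induction hn : w.length generalizing w with
  | zero =>
    obtain rfl := List.length_eq_zero_iff.1 hn
    simp [pn, mW]
  | succ n ih =>
    obtain ⟨w, i, rfl⟩ := (List.eq_nil_or_concat' w).resolve_left (by rintro rfl; simp at hn)
    have hw : w.length = n := by simpa using hn
    have hsum : ∑ᶠ u ∈ {u : Word N | sim u w}, pn sim m n [] u = massCl sim m w :=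
      finsum_mem_congr rfl fun u hu => ih u ((hlen u w hu).trans hw)
    rw [pn_succ_append hsim, hsum, div_self (massCl_pos hsim hlen hm w).ne', mul_one]

theorem green_nil (hsim : Equivalence sim)
    (hlen : ∀ v w : Word N, sim v w → v.length = w.length) (hm : ∀ a, 0 < m a) (w : Word N) :
    green sim m [] w = mW m w := by
  rw [green, if_pos (by simp)]
  exact pn_nil hsim hlen hm w

theorem mkernel_append (hsim : Equivalence sim)
    (hlen : ∀ v w : Word N, sim v w → v.length = w.length) (hm : ∀ a, 0 < m a)
    {v w : Word N} (h : v.length ≤ w.length) (i : Fin N) :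
    mkernel sim m v (w ++ [i]) =
      (∑ᶠ u ∈ {u : Word N | sim u w}, pn sim m (w.length - v.length) v u) / massCl sim m w := by
  have hl : (w ++ [i]).length - v.length = w.length - v.length + 1 := by
    rw [List.length_append, List.length_singleton, Nat.sub_add_comm h]
  rw [mkernel, green_nil hsim hlen hm, green, if_pos (h.trans (by simp)), hl,
    pn_succ_append hsim, mul_div_cancel_left₀ _ (mW_pos hm _).ne']

theorem green_eq_zero {v w : Word N} (h : w.length ≤ v.length) (hne : v ≠ w) :
    green sim m v w = 0 := by
  rw [green, Nat.sub_eq_zero_of_le h, pn, if_neg hne.symm, ite_self]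

theorem mkernel_append_eq (hsim : Equivalence sim)
    (hlen : ∀ v w : Word N, sim v w → v.length = w.length) (hm : ∀ a, 0 < m a)
    {v w w' : Word N} (hw : sim w w') {i j : Fin N} (hi : v ≠ w ++ [i]) (hj : v ≠ w' ++ [j]) :
    mkernel sim m v (w ++ [i]) = mkernel sim m v (w' ++ [j]) := by
  have hl := hlen w w' hw
  rcases le_or_gt v.length w.length with h | h
  · rw [mkernel_append hsim hlen hm h, mkernel_append hsim hlen hm (hl ▸ h),
      setOf_sim_eq hsim hw, massCl_congr hsim hw, hl]
  · rw [mkernel, mkernel, green_eq_zero (by simpa using h) hi,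
      green_eq_zero (by simpa [← hl] using h) hj, zero_div, zero_div]

end Martin

/-- If the word `v` is none of the children `wi`, `wj`, `w̃i`, `w̃j`, where `w̃ ∼ w`, then
`k(v,wi) = k(v,wj) = k(v,w̃j) = k(v,w̃i)`. -/
theorem mkernel_children {N : ℕ} (hN : 2 ≤ N)
    (sim : Martin.Word N → Martin.Word N → Prop) (hsim : Equivalence sim)
    (hlen : ∀ v w : Martin.Word N, sim v w → v.length = w.length)
    (m : Fin N → ℝ) (hm : ∀ a, m a ∈ Set.Ioo (0 : ℝ) 1) (hm1 : ∑ a, m a = 1)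
    (v w wt : Martin.Word N) (hwt : sim wt w) (i j : Fin N)
    (hvwi : v ≠ w ++ [i]) (hvwj : v ≠ w ++ [j])
    (hvwti : v ≠ wt ++ [i]) (hvwtj : v ≠ wt ++ [j]) :
    Martin.mkernel sim m v (w ++ [i]) = Martin.mkernel sim m v (w ++ [j]) ∧
      Martin.mkernel sim m v (w ++ [j]) = Martin.mkernel sim m v (wt ++ [j]) ∧
      Martin.mkernel sim m v (wt ++ [j]) = Martin.mkernel sim m v (wt ++ [i]) := by
  have hpos : ∀ a, 0 < m a := fun a => (hm a).1
  exact ⟨Martin.mkernel_append_eq hsim hlen hpos (hsim.refl w) hvwi hvwj,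
    Martin.mkernel_append_eq hsim hlen hpos (hsim.symm hwt) hvwj hvwtj,
    Martin.mkernel_append_eq hsim hlen hpos (hsim.refl wt) hvwtj hvwti⟩
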